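/- On ℝ^{2n+1} with coordinates (x^α, y_α, z) and functions F^α_β = F^β_α depending only on the x^α and z, the frame e_α = ∂_{x^α} − Σ_ω F^ω_α ∂_{y_ω}, e_{n+α} = ∂_{y_α}, e_{2n+1} = ∂_z, with φe_α = −e_α, φe_{n+α} = e_{n+α}, φξ = 0, ξ = e_{2n+1}, η = dz, g(e_α, e_{n+α}) = g(e_{2n+1}, e_{2n+1}) = 1 (other pairings zero), defines an almost para-cosymplectic structure (dη = 0 and Φ = 2Σ dx^α ∧ dy_α is closed), and the eigendistribution D⁻ = span(e_α) is involutive if and only if F^β_α = ∂²H/∂x^α∂x^β for some function H depending only on the x^α and z. -/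

import Mathlib

noncomputable section

namespace Stmt19

open Finset

/-- Points (and tangent vectors) of ℝ^{2n+1} with coordinates `(x^α, y_α, z)`. -/
abbrev Pt (n : ℕ) := (Fin n → ℝ) × (Fin n → ℝ) × ℝ

/-- The coordinate vector `∂_{x^α}`. -/
def eaV (n : ℕ) (α : Fin n) : Pt n := ((Pi.single α 1 : Fin n → ℝ), 0, 0)

/-- The coordinate vector `∂_{y_α}` (= the frame vector `e_{n+α}`). -/
def enV (n : ℕ) (α : Fin n) : Pt n := (0, (Pi.single α 1 : Fin n → ℝ), 0)

/-- The coordinate vector `∂_z` (= `ξ`). -/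
def dzV (n : ℕ) : Pt n := (0, 0, 1)

/-- The frame fields `e_α = ∂_{x^α} − Σ_ω F^ω_α ∂_{y_ω}`. -/
def eaF (n : ℕ) (F : Fin n → Fin n → Pt n → ℝ) (α : Fin n) : Pt n → Pt n := fun p =>
  ((Pi.single α 1 : Fin n → ℝ), fun ω => -(F ω α p), 0)

/-- `η = dz`. -/
def etaP (n : ℕ) (v : Pt n) : ℝ := v.2.2

/-- The dual coframe `θ^α = dx^α`. -/
def thA (n : ℕ) (α : Fin n) (v : Pt n) : ℝ := v.1 α

/-- The dual coframe `θ^{n+α} = dy_α + Σ_ω F^α_ω dx^ω`. -/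
def thB (n : ℕ) (F : Fin n → Fin n → Pt n → ℝ) (α : Fin n) (p v : Pt n) : ℝ :=
  v.2.1 α + ∑ ω, F α ω p * v.1 ω

/-- The metric: `g(e_α, e_{n+α}) = g(e_{n+α}, e_α) = g(ξ, ξ) = 1`, other
pairings of frame vectors zero. -/
def gP (n : ℕ) (F : Fin n → Fin n → Pt n → ℝ) (p v w : Pt n) : ℝ :=
  (∑ α, (thA n α v * thB n F α p w + thB n F α p v * thA n α w)) + v.2.2 * w.2.2

/-- `φ e_α = −e_α`, `φ e_{n+α} = e_{n+α}`, `φ ξ = 0`. -/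
def phiP (n : ℕ) (F : Fin n → Fin n → Pt n → ℝ) (p v : Pt n) : Pt n :=
  (∑ α, thB n F α p v • enV n α) - (∑ α, thA n α v • eaF n F α p)

/-- The fundamental 2-form `Φ(X,Y) = g(X, φY)`. -/
def PhiForm (n : ℕ) (F : Fin n → Fin n → Pt n → ℝ) (p v w : Pt n) : ℝ :=
  gP n F p v (phiP n F p w)

/-- Lie bracket of vector fields. -/
def brk (n : ℕ) (X Y : Pt n → Pt n) : Pt n → Pt n := fun p =>
  fderiv ℝ Y p (X p) - fderiv ℝ X p (Y p)

theorem param_hasFDerivAt {P E : Type} [NormedAddCommGroup P] [NormedSpace ℝ P]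
    [FiniteDimensional ℝ P] [NormedAddCommGroup E] [NormedSpace ℝ E]
    (f : P × ℝ → E) (hf : ContDiff ℝ 1 f) (p : P) :
    HasFDerivAt (fun p => ∫ t in (0 : ℝ)..1, f (p, t))
      (∫ t in (0 : ℝ)..1, (fderiv ℝ f (p, t)).comp (ContinuousLinearMap.inl ℝ P ℝ)) p := by
  have hc : Continuous f := hf.continuous
  have hdc : Continuous (fun q : P × ℝ =>
      (fderiv ℝ f q).comp (ContinuousLinearMap.inl ℝ P ℝ)) :=
    (hf.continuous_fderiv one_ne_zero).clm_comp continuous_const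
  have : ProperSpace P := FiniteDimensional.proper ℝ P
  obtain ⟨C, hC⟩ := ((isCompact_closedBall p (1 : ℝ)).prod
    (isCompact_Icc (a := (0 : ℝ)) (b := 1))).exists_bound_of_continuousOn hdc.continuousOn
  refine intervalIntegral.hasFDerivAt_integral_of_dominated_of_fderiv_le
    (F := fun p t => f (p, t))
    (F' := fun p t => (fderiv ℝ f (p, t)).comp (ContinuousLinearMap.inl ℝ P ℝ))
    (bound := fun _ => C) (s := Metric.closedBall p 1)
    (Metric.closedBall_mem_nhds p one_pos) ?_ ?_ ?_ ?_ ?_ ?_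
  · refine Filter.Eventually.of_forall fun x => ?_
    exact (hc.comp (by fun_prop : Continuous fun t : ℝ => (x, t))).aestronglyMeasurable
  · exact (hc.comp (by fun_prop : Continuous fun t : ℝ => (p, t))).intervalIntegrable _ _
  · exact (hdc.comp (by fun_prop : Continuous fun t : ℝ => (p, t))).aestronglyMeasurable
  · refine Filter.Eventually.of_forall fun t ht x hx => ?_
    rw [Set.uIoc_of_le zero_le_one] at ht
    exact hC (x, t) ⟨hx, ht.1.le, ht.2⟩
  · exact intervalIntegrable_const
  · refine Filter.Eventually.of_forall fun t _ x _ => ?_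
    exact ((hf.differentiable one_ne_zero).differentiableAt.hasFDerivAt).comp x
      (hasFDerivAt_prodMk_left x t)

theorem param_contDiff_nat {P : Type} [NormedAddCommGroup P] [NormedSpace ℝ P]
    [FiniteDimensional ℝ P] (m : ℕ) :
    ∀ {E : Type} [NormedAddCommGroup E] [NormedSpace ℝ E]
      (f : P × ℝ → E), ContDiff ℝ (⊤ : ℕ∞) f →
      ContDiff ℝ m (fun p => ∫ t in (0 : ℝ)..1, f (p, t)) := by
  induction m with
  | zero =>
    intro E _ _ f hf
    have h1 : ContDiff ℝ 1 f := hf.of_le (by exact_mod_cast le_top)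
    exact contDiff_zero.2 (continuous_iff_continuousAt.2
      fun p => (param_hasFDerivAt f h1 p).continuousAt)
  | succ m ih =>
    intro E _ _ f hf
    have h1 : ContDiff ℝ 1 f := hf.of_le (by exact_mod_cast le_top)
    push_cast
    refine contDiff_succ_iff_fderiv.2
      ⟨fun p => (param_hasFDerivAt f h1 p).differentiableAt, by simp, ?_⟩
    have : fderiv ℝ (fun p => ∫ t in (0 : ℝ)..1, f (p, t)) = fun p =>
        ∫ t in (0 : ℝ)..1, (fderiv ℝ f (p, t)).comp (ContinuousLinearMap.inl ℝ P ℝ) :=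
      funext fun p => (param_hasFDerivAt f h1 p).fderiv
    rw [this]
    exact ih (fun q : P × ℝ => (fderiv ℝ f q).comp (ContinuousLinearMap.inl ℝ P ℝ))
      ((hf.fderiv_right (m := (⊤ : ℕ∞)) (by simp)).clm_comp contDiff_const)

theorem param_contDiff {P : Type} [NormedAddCommGroup P] [NormedSpace ℝ P]
    [FiniteDimensional ℝ P] {E : Type} [NormedAddCommGroup E] [NormedSpace ℝ E]
    (f : P × ℝ → E) (hf : ContDiff ℝ (⊤ : ℕ∞) f) :
    ContDiff ℝ (⊤ : ℕ∞) (fun p => ∫ t in (0 : ℝ)..1, f (p, t)) :=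
  contDiff_infty.2 fun m => param_contDiff_nat m f hf

theorem sum_eaV (n : ℕ) (v : Fin n → ℝ) : ((v, 0, 0) : Pt n) = ∑ β, v β • eaV n β := by
  have : ∀ s : Finset (Fin n), ∑ β ∈ s, v β • eaV n β
      = ((∑ β ∈ s, v β • (Pi.single β 1 : Fin n → ℝ), 0, 0) : Pt n) := by
    intro s
    induction s using Finset.induction_on with
    | empty => simp only [Finset.sum_empty]; rfl
    | insert a s ha ih => rw [Finset.sum_insert ha, Finset.sum_insert ha, ih]; simp [eaV]
  rw [this]
  congr 1
  ext i
  simp [Finset.sum_apply, Pi.single_apply]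

/-- Poincaré lemma in the `x` variables with parameters. -/
theorem exists_potential (n : ℕ) (A : Fin n → Pt n → ℝ)
    (hA : ∀ α, ContDiff ℝ (⊤ : ℕ∞) (A α))
    (hxz : ∀ α (p q : Pt n), p.1 = q.1 → p.2.2 = q.2.2 → A α p = A α q)
    (hcl : ∀ α β p, fderiv ℝ (A β) p (eaV n α) = fderiv ℝ (A α) p (eaV n β)) :
    ∃ g : Pt n → ℝ, ContDiff ℝ (⊤ : ℕ∞) g ∧
      (∀ p q : Pt n, p.1 = q.1 → p.2.2 = q.2.2 → g p = g q) ∧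
      ∀ α p, fderiv ℝ g p (eaV n α) = A α p := by
  let S : Pt n × ℝ → Pt n := fun q => (q.2 • q.1.1, q.1.2.1, q.1.2.2)
  have hS : ContDiff ℝ (⊤ : ℕ∞) S := by fun_prop
  let k : Pt n × ℝ → ℝ := fun q => ∑ β, q.1.1 β * A β (S q)
  have hk : ContDiff ℝ (⊤ : ℕ∞) k := by
    refine ContDiff.sum fun β _ => ContDiff.mul (by fun_prop) ((hA β).comp hS)
  have hk1 : ContDiff ℝ 1 k := hk.of_le (by exact_mod_cast le_top)
  have hAd : ∀ α p, HasFDerivAt (A α) (fderiv ℝ (A α) p) p := fun α p =>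
    ((hA α).differentiable (by simp)).differentiableAt.hasFDerivAt
  refine ⟨fun p => ∫ t in (0 : ℝ)..1, k (p, t), param_contDiff k hk, ?_, ?_⟩
  · intro p q h1 h2
    simp only [k, S]
    congr 1
    ext t
    refine Finset.sum_congr rfl fun β _ => ?_
    rw [h1]
    congr 1
    exact hxz β _ _ (by simp [h1]) (by simpa using h2)
  · intro α p
    have hkd : Continuous (fun t : ℝ =>
        (fderiv ℝ k (p, t)).comp (ContinuousLinearMap.inl ℝ (Pt n) ℝ)) :=
      ((hk1.continuous_fderiv one_ne_zero).comp
        (by fun_prop : Continuous fun t : ℝ => (p, t))).clm_comp continuous_const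
    rw [(param_hasFDerivAt k hk1 p).fderiv,
      ContinuousLinearMap.intervalIntegral_apply (hkd.intervalIntegrable _ _)]
    -- derivative of the integrand
    have key : ∀ t : ℝ, HasDerivAt (fun t : ℝ => t * A α (S (p, t)))
        ((fderiv ℝ k (p, t)).comp (ContinuousLinearMap.inl ℝ (Pt n) ℝ) (eaV n α)) t := by
      intro t
      have e1 : HasDerivAt (fun s : ℝ => S (p, s)) ((p.1, 0, 0) : Pt n) t := by
        refine HasDerivAt.prodMk ?_ (hasDerivAt_const t ((p.2.1, p.2.2) : (Fin n → ℝ) × ℝ))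
        simpa using (hasDerivAt_id t).smul_const p.1
      have e2 := (hasDerivAt_id t).mul ((hAd α (S (p, t))).comp_hasDerivAt t e1)
      have f0 : HasDerivAt (fun s : ℝ => ((p + s • eaV n α, t) : Pt n × ℝ)) (eaV n α, 0) 0 := by
        refine HasDerivAt.prodMk ?_ (hasDerivAt_const 0 _)
        simpa using ((hasDerivAt_id (0 : ℝ)).smul_const (eaV n α)).const_add p
      have hp0 : ((p + (0 : ℝ) • eaV n α, t) : Pt n × ℝ) = (p, t) := by simp
      have f1 : HasDerivAt (fun s : ℝ => k (p + s • eaV n α, t))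
          (fderiv ℝ k (p, t) (eaV n α, 0)) 0 := by
        have := (hk1.differentiable one_ne_zero).differentiableAt.hasFDerivAt
          (x := ((p + (0 : ℝ) • eaV n α, t) : Pt n × ℝ))
        have := this.comp_hasDerivAt 0 f0
        rw [hp0] at this
        exact this
      have f2 : HasDerivAt (fun s : ℝ => S (p + s • eaV n α, t)) (t • eaV n α) 0 := by
        have : (fun s : ℝ => S (p + s • eaV n α, t)) = fun s => S (p, t) + s • (t • eaV n α) := by
          funext s
          simp only [S, eaV]
          ext i <;> simp
          ring
        rw [this]
        simpa using ((hasDerivAt_id (0 : ℝ)).smul_const (t • eaV n α)).const_add (S (p, t))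
      have f3 : ∀ β, HasDerivAt (fun s : ℝ => (p + s • eaV n α).1 β)
          ((Pi.single α 1 : Fin n → ℝ) β) 0 := by
        intro β
        simpa [eaV] using ((hasDerivAt_id (0 : ℝ)).mul_const
          ((Pi.single α 1 : Fin n → ℝ) β)).const_add (p.1 β)
      have f4 : ∀ β, HasDerivAt (fun s : ℝ => A β (S (p + s • eaV n α, t)))
          (t * fderiv ℝ (A β) (S (p, t)) (eaV n α)) 0 := by
        intro β
        have := (hAd β (S (p + (0 : ℝ) • eaV n α, t))).comp_hasDerivAt 0 f2
        rw [hp0, map_smul, smul_eq_mul] at this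
        exact this
      have f5 := HasDerivAt.fun_sum (u := Finset.univ) fun β _ => (f3 β).mul (f4 β)
      have f6 := f1.unique f5
      refine e2.congr_deriv ?_
      simp only [ContinuousLinearMap.comp_apply, ContinuousLinearMap.inl_apply]
      rw [f6, sum_eaV, map_sum]
      simp only [map_smul, smul_eq_mul, hcl α, zero_smul, add_zero, id, one_mul,
        Finset.sum_add_distrib, Pi.single_apply, ite_mul, zero_mul, Finset.sum_ite_eq',
        Finset.mem_univ, if_true, Finset.mul_sum, Function.comp]
      congr 1
      refine Finset.sum_congr rfl fun β _ => ?_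
      ring
    have hint : Continuous (fun t : ℝ =>
        (fderiv ℝ k (p, t)).comp (ContinuousLinearMap.inl ℝ (Pt n) ℝ) (eaV n α)) :=
      hkd.clm_apply continuous_const
    rw [intervalIntegral.integral_eq_sub_of_hasDerivAt (fun t _ => key t)
      (hint.intervalIntegrable _ _)]
    simp [S]

theorem phiP_eq (n : ℕ) (F : Fin n → Fin n → Pt n → ℝ) (p v : Pt n) :
    phiP n F p v = (-v.1, fun ω => thB n F ω p v + ∑ α, v.1 α * F ω α p, 0) := by
  unfold phiP
  refine Prod.ext ?_ (Prod.ext ?_ ?_)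
  · ext i
    simp [Prod.fst_sum, Prod.snd_sum, Finset.sum_apply, enV, eaF, thA, Pi.single_apply]
  · ext i
    simp [Prod.fst_sum, Prod.snd_sum, Finset.sum_apply, enV, eaF, thA, Pi.single_apply]
  · simp [Prod.fst_sum, Prod.snd_sum, enV, eaF]

theorem thA_phiP (n : ℕ) (F : Fin n → Fin n → Pt n → ℝ) (p v : Pt n) (α : Fin n) :
    thA n α (phiP n F p v) = - thA n α v := by
  rw [phiP_eq]; simp [thA]

theorem thB_phiP (n : ℕ) (F : Fin n → Fin n → Pt n → ℝ) (p v : Pt n) (α : Fin n) :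
    thB n F α p (phiP n F p v) = thB n F α p v := by
  rw [phiP_eq]
  simp [thB, mul_comm]

theorem PhiForm_eq (n : ℕ) (F : Fin n → Fin n → Pt n → ℝ)
    (hFsym : ∀ α β, F α β = F β α) (p v w : Pt n) :
    PhiForm n F p v w = ∑ α, (v.1 α * w.2.1 α - v.2.1 α * w.1 α) := by
  have h0 : (phiP n F p w).2.2 = 0 := by rw [phiP_eq]
  have hs : ∑ α, v.1 α * ∑ ω, F α ω p * w.1 ω = ∑ α, (∑ ω, F α ω p * v.1 ω) * w.1 α := by
    simp only [Finset.mul_sum, Finset.sum_mul]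
    rw [Finset.sum_comm]
    refine Finset.sum_congr rfl fun a _ => Finset.sum_congr rfl fun b _ => ?_
    rw [hFsym]; ring
  unfold PhiForm gP
  simp only [thA_phiP, thB_phiP, h0]
  simp only [thA, thB, mul_add, add_mul, Finset.sum_add_distrib, Finset.sum_sub_distrib, mul_neg,
    Finset.sum_neg_distrib]
  rw [hs]; ring

theorem fderiv_indep (n : ℕ) (f : Pt n → ℝ) (hf : ContDiff ℝ (⊤ : ℕ∞) f)
    (hxz : ∀ p q : Pt n, p.1 = q.1 → p.2.2 = q.2.2 → f p = f q) (p : Pt n)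
    (a b : Fin n → ℝ) (c : ℝ) : fderiv ℝ f p (a, b, c) = fderiv ℝ f p (a, 0, c) := by
  have h : ∀ v : Pt n, HasDerivAt (fun s : ℝ => f (p + s • v)) (fderiv ℝ f p v) 0 := by
    intro v
    have hd : HasFDerivAt f (fderiv ℝ f p) (p + (0 : ℝ) • v) := by
      simpa using (hf.differentiable (by simp)).differentiableAt.hasFDerivAt (x := p)
    refine hd.comp_hasDerivAt 0 ?_
    simpa using ((hasDerivAt_id (0 : ℝ)).smul_const v).const_add p
  refine (h _).unique ((h (a, 0, c)).congr_of_eventuallyEq (Filter.Eventually.of_forall ?_))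
  intro s
  exact hxz _ _ (by simp) (by simp)

theorem brk_eq (n : ℕ) (F : Fin n → Fin n → Pt n → ℝ)
    (hFxz : ∀ α β (p q : Pt n), p.1 = q.1 → p.2.2 = q.2.2 → F α β p = F α β q)
    (hFsmooth : ∀ α β, ContDiff ℝ (⊤ : ℕ∞) (F α β)) (α β : Fin n) (p : Pt n) :
    brk n (eaF n F α) (eaF n F β) p = (0, fun ω =>
      fderiv ℝ (F ω α) p (eaV n β) - fderiv ℝ (F ω β) p (eaV n α), 0) := by
  have hd : ∀ γ, HasFDerivAt (eaF n F γ)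
      ((0 : Pt n →L[ℝ] (Fin n → ℝ)).prod
        ((ContinuousLinearMap.pi fun ω => -(fderiv ℝ (F ω γ) p)).prod 0)) p := by
    intro γ
    refine HasFDerivAt.prodMk (hasFDerivAt_const _ _)
      (HasFDerivAt.prodMk (hasFDerivAt_pi.2 fun ω => ?_) (hasFDerivAt_const _ _))
    exact (((hFsmooth ω γ).differentiable (by simp)).differentiableAt.hasFDerivAt).neg
  have h2 : ∀ ω γ δ, fderiv ℝ (F ω γ) p (eaF n F δ p) = fderiv ℝ (F ω γ) p (eaV n δ) :=
    fun ω γ δ => fderiv_indep n _ (hFsmooth ω γ) (hFxz ω γ) p _ _ _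
  unfold brk
  rw [(hd α).fderiv, (hd β).fderiv]
  refine Prod.ext ?_ (Prod.ext ?_ ?_)
  · simp
  · ext ω
    simp [h2]
    ring
  · simp

theorem invol_iff (n : ℕ) (F : Fin n → Fin n → Pt n → ℝ)
    (hFxz : ∀ α β (p q : Pt n), p.1 = q.1 → p.2.2 = q.2.2 → F α β p = F α β q)
    (hFsmooth : ∀ α β, ContDiff ℝ (⊤ : ℕ∞) (F α β)) (α β : Fin n) (p : Pt n) :
    brk n (eaF n F α) (eaF n F β) p
          ∈ Submodule.span ℝ (Set.range fun γ : Fin n => eaF n F γ p) ↔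
      ∀ ω, fderiv ℝ (F ω β) p (eaV n α) = fderiv ℝ (F ω α) p (eaV n β) := by
  rw [brk_eq n F hFxz hFsmooth]
  constructor
  · intro h ω
    obtain ⟨c, hc⟩ := (Submodule.mem_span_range_iff_exists_fun ℝ).1 h
    have hc0 : ∀ γ, c γ = 0 := by
      intro γ
      have := congrArg (fun v : Pt n => v.1 γ) hc
      simpa [Prod.fst_sum, Finset.sum_apply, eaF, Pi.single_apply] using this
    have := congrArg (fun v : Pt n => v.2.1 ω) hc
    simp [hc0] at this
    linarith
  · intro h
    have : ((0, fun ω => fderiv ℝ (F ω α) p (eaV n β) - fderiv ℝ (F ω β) p (eaV n α), 0) : Pt n)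
        = 0 := by
      refine Prod.ext rfl (Prod.ext ?_ rfl)
      ext ω
      simp [h ω]
    rw [this]
    exact Submodule.zero_mem _

/-- for symmetric `F^α_β = F^β_α` depending only on the `x^α` and
`z`, the above structure is almost para-cosymplectic (`dη = 0`, `dΦ = 0`,
indeed `Φ = 2Σ dx^α ∧ dy_α` has constant coefficients), and the
eigendistribution `D⁻ = span(e_α)` is involutive iff
`F^β_α = ∂²H/∂x^α∂x^β` for some function `H` of the `x^α` and `z` only. -/
theorem stmt19 (n : ℕ) (F : Fin n → Fin n → Pt n → ℝ)
    (hFsym : ∀ α β, F α β = F β α)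
    (hFxz : ∀ α β (p q : Pt n), p.1 = q.1 → p.2.2 = q.2.2 → F α β p = F α β q)
    (hFsmooth : ∀ α β, ContDiff ℝ (⊤ : ℕ∞) (F α β)) :
    -- almost paracontact metric structure
    (∀ p v, phiP n F p (phiP n F p v) = v - etaP n v • dzV n) ∧
    (∀ _p : Pt n, etaP n (dzV n) = 1) ∧
    (∀ p, phiP n F p (dzV n) = 0) ∧
    (∀ p v, etaP n (phiP n F p v) = 0) ∧
    (∀ p v w, gP n F p (phiP n F p v) (phiP n F p w)
        = -(gP n F p v w) + etaP n v * etaP n w) ∧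
    -- dη = 0 (η = dz has constant coefficients)
    (∀ p (v w : Pt n),
        (1 / 2) * (fderiv ℝ (fun _ : Pt n => etaP n w) p v
          - fderiv ℝ (fun _ : Pt n => etaP n v) p w) = 0) ∧
    -- Φ = 2Σ dx^α ∧ dy_α : constant coefficients ...
    (∀ p v w, PhiForm n F p v w = ∑ α, (v.1 α * w.2.1 α - v.2.1 α * w.1 α)) ∧
    -- ... hence dΦ = 0 (checked on constant vector fields)
    (∀ p (u v w : Pt n),
        fderiv ℝ (fun q => PhiForm n F q v w) p u
          - fderiv ℝ (fun q => PhiForm n F q u w) p v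
          + fderiv ℝ (fun q => PhiForm n F q u v) p w = 0) ∧
    -- involutivity of D⁻ ↔ existence of the potential H
    ((∀ (α β : Fin n) (p : Pt n),
        brk n (eaF n F α) (eaF n F β) p
          ∈ Submodule.span ℝ (Set.range fun γ : Fin n => eaF n F γ p)) ↔
      (∃ Hf : Pt n → ℝ, ContDiff ℝ (⊤ : ℕ∞) Hf ∧
        (∀ p q : Pt n, p.1 = q.1 → p.2.2 = q.2.2 → Hf p = Hf q) ∧
        ∀ (α β : Fin n) (p : Pt n),
          F β α p = fderiv ℝ (fun q => fderiv ℝ Hf q (eaV n β)) p (eaV n α))) := by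
  refine ⟨?_, fun _ => rfl, ?_, ?_, ?_, ?_, PhiForm_eq n F hFsym, ?_, ?_⟩
  · intro p v
    rw [phiP_eq n F p (phiP n F p v)]
    simp only [thB_phiP]
    rw [phiP_eq]
    refine Prod.ext ?_ (Prod.ext ?_ ?_)
    · simp [dzV]
    · ext i
      simp [dzV, thB, mul_comm]
    · simp [dzV, etaP]
  · intro p
    rw [phiP_eq]
    refine Prod.ext ?_ (Prod.ext ?_ ?_)
    · simp [dzV]
    · ext i
      simp [dzV, thB]
    · simp
  · intro p v
    rw [phiP_eq]; rfl
  · intro p v w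
    have h0 : ∀ w, (phiP n F p w).2.2 = 0 := fun w => by rw [phiP_eq]
    unfold gP
    simp only [thA_phiP, thB_phiP, h0, etaP]
    simp only [neg_add, neg_mul, mul_neg, Finset.sum_add_distrib, Finset.sum_neg_distrib]
    ring
  · intro p v w
    simp
  · intro p u v w
    simp only [PhiForm_eq n F hFsym]
    simp
  · simp only [invol_iff n F hFxz hFsmooth]
    constructor
    · intro h
      have hG := fun ω => exists_potential n (fun α => F ω α) (fun α => hFsmooth ω α)
        (fun α => hFxz ω α) (fun α β p => h α β p ω)
      choose G hG1 hG2 hG3 using hG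
      obtain ⟨H, h1, h2, h3⟩ := exists_potential n G hG1 hG2
        (fun α β p => by rw [hG3, hG3, hFsym])
      refine ⟨H, h1, h2, fun α β p => ?_⟩
      have : (fun q => fderiv ℝ H q (eaV n β)) = G β := funext fun q => h3 β q
      rw [this, hG3]
    · rintro ⟨H, h1, -, h3⟩ α β p ω
      have hK : ContDiff ℝ (⊤ : ℕ∞) (fun q => fderiv ℝ H q (eaV n ω)) :=
        (h1.fderiv_right (m := (⊤ : ℕ∞)) (by simp)).clm_apply contDiff_const
      have hF : ∀ γ, F ω γ = fun q =>
          fderiv ℝ (fun q => fderiv ℝ H q (eaV n ω)) q (eaV n γ) :=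
        fun γ => funext fun q => h3 γ ω q
      generalize (fun q => fderiv ℝ H q (eaV n ω)) = K at hK hF
      have hK' : ContDiff ℝ (⊤ : ℕ∞) (fderiv ℝ K) :=
        hK.fderiv_right (m := (⊤ : ℕ∞)) (by simp)
      have hd : ∀ γ δ, fderiv ℝ (F ω γ) p (eaV n δ)
          = fderiv ℝ (fderiv ℝ K) p (eaV n δ) (eaV n γ) := by
        intro γ δ
        rw [hF]
        have := (((hK'.differentiable (by simp)).differentiableAt (x := p)).hasFDerivAt).clm_apply
          (hasFDerivAt_const (eaV n γ) p)
        rw [this.fderiv]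
        simp
      rw [hd, hd]
      exact (hK.contDiffAt.isSymmSndFDerivAt (by
        simp only [minSmoothness_of_isRCLikeNormedField]
        exact WithTop.coe_le_coe.2 (le_top : (2 : ℕ∞) ≤ ⊤))).eq _ _

end Stmt19
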